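/- (Failure of deductive right uniform interpolation for the global consequence relation of modal logic K.) Let p, q, r be distinct propositional variables and φ := (q → p) ∧ (p → □p) ∧ (p → r). There is no modal formula ε with variables among {q, r} such that φ ⊢_K ε and, for every modal formula θ not containing p, φ ⊢_K θ implies ε ⊢_K θ. In particular, φ has no deductive right uniform interpolant with respect to p for ⊢_K. -/

import Mathlib

/-!
Modulo `p`, the formula `φ` says that `r` holds at every world reachable from a world where `q`
holds, so `φ` entails `q → □^k r` for every `k`, and an interpolant `ε` would have to entail all of
these at once. No formula does so: let `n` be the modal depth of `ε`, and consider the chain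
`0 → 1 → 2 → ⋯` in which `q` holds only at `0` and `r` fails only at `n + 1`. This chain refutes
`q → □^(n+1) r` at `0`. But `ε` holds in it everywhere, because the truth of `ε` at `i` depends only
on the valuation on `[i, i + n]` (`forces_chain_congr`), and there the chain agrees with a model of
`φ`: for `i = 0` with the chain on which `r` is always true (and `p` is taken to be true everywhere),
for `i ≥ 1` with the chain on which `q` and `p` are always false.
-/


/-- Modal formulas over variables indexed by `ℕ`. -/
inductive MForm : Type
  | var : ℕ → MForm
  | bot : MForm
  | and : MForm → MForm → MForm
  | imp : MForm → MForm → MForm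
  | box : MForm → MForm

/-- The set of propositional variables occurring in a modal formula. -/
def MForm.vars : MForm → Finset ℕ
  | .var p => {p}
  | .bot => ∅
  | .and a b => a.vars ∪ b.vars
  | .imp a b => a.vars ∪ b.vars
  | .box a => a.vars

/-- The k-fold iterate □^k of the box modality. -/
def boxIter : ℕ → MForm → MForm
  | 0, a => a
  | n + 1, a => .box (boxIter n a)

/-- A Kripke model for modal logic. -/
structure MModel where
  W : Type
  R : W → W → Prop
  val : ℕ → W → Prop

/-- The (classical) modal forcing relation. -/
def MModel.Forces (M : MModel) : M.W → MForm → Prop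
  | w, .var p => M.val p w
  | _, .bot => False
  | w, .and a b => M.Forces w a ∧ M.Forces w b
  | w, .imp a b => M.Forces w a → M.Forces w b
  | w, .box a => ∀ v, M.R w v → M.Forces v a

/-- The global consequence relation of the modal logic K. -/
def GlobalK (φ θ : MForm) : Prop :=
  ∀ M : MModel, (∀ w, M.Forces w φ) → ∀ w, M.Forces w θ

/-- The conjunction ⋀_{k=0}^{N} (q → □^k r). -/
def chainForm (q r : ℕ) : ℕ → MForm
  | 0 => .imp (.var q) (.var r)
  | N + 1 => .and (chainForm q r N) (.imp (.var q) (boxIter (N + 1) (.var r)))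

/-- The formula φ := (q → p) ∧ (p → □p) ∧ (p → r). -/
def phiK (p q r : ℕ) : MForm :=
  .and (.and (.imp (.var q) (.var p)) (.imp (.var p) (.box (.var p))))
    (.imp (.var p) (.var r))

/-- The modal depth of a formula: the maximal nesting of boxes. -/
def MForm.depth : MForm → ℕ
  | .var _ => 0
  | .bot => 0
  | .and a b => max a.depth b.depth
  | .imp a b => max a.depth b.depth
  | .box a => a.depth + 1

/-- The infinite chain `0 → 1 → 2 → ⋯` with a given valuation. -/
def chainModel (v : ℕ → ℕ → Prop) : MModel where
  W := ℕ
  R i j := j = i + 1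
  val := v

/-- Locality: forcing at `i` in a chain depends only on the variables that occur in the formula and
on the worlds within its modal depth of `i`. -/
theorem forces_chain_congr (v v' : ℕ → ℕ → Prop) (a : MForm) (i : ℕ)
    (h : ∀ j, i ≤ j → j ≤ i + a.depth → ∀ x ∈ a.vars, (v x j ↔ v' x j)) :
    (chainModel v).Forces i a ↔ (chainModel v').Forces i a := by
  induction a generalizing i with
  | var x => exact h i le_rfl (by simp [MForm.depth]) x (by simp [MForm.vars])
  | bot => exact Iff.rfl
  | and a b iha ihb =>
    simp only [MForm.depth, MForm.vars, Finset.mem_union] at h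
    exact and_congr (iha i fun j h1 h2 x hx => h j h1 (by omega) x (.inl hx))
      (ihb i fun j h1 h2 x hx => h j h1 (by omega) x (.inr hx))
  | imp a b iha ihb =>
    simp only [MForm.depth, MForm.vars, Finset.mem_union] at h
    exact imp_congr (iha i fun j h1 h2 x hx => h j h1 (by omega) x (.inl hx))
      (ihb i fun j h1 h2 x hx => h j h1 (by omega) x (.inr hx))
  | box a ih =>
    simp only [MForm.depth, MForm.vars] at h
    have key := ih (i + 1) fun j h1 h2 x hx => h j (by omega) (by omega) x hx
    constructor
    · rintro H _ rfl
      exact key.1 (H _ rfl)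
    · rintro H _ rfl
      exact key.2 (H _ rfl)

theorem vars_boxIter (k : ℕ) (a : MForm) : (boxIter k a).vars = a.vars := by
  induction k with
  | zero => rfl
  | succ k ih => exact ih

theorem forces_chain_boxIter (v : ℕ → ℕ → Prop) (k i : ℕ) (a : MForm)
    (h : (chainModel v).Forces i (boxIter k a)) : (chainModel v).Forces (i + k : ℕ) a := by
  induction k generalizing i with
  | zero => exact h
  | succ k ih =>
    have := ih (i + 1) (h (i + 1) rfl)
    rwa [show i + 1 + k = i + (k + 1) by omega] at this

theorem phiK_entails_boxIter (p q r k : ℕ) :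
    GlobalK (phiK p q r) (.imp (.var q) (boxIter k (.var r))) := by
  intro M hM w hq
  have step : ∀ (k : ℕ) (w : M.W), M.val p w → M.Forces w (boxIter k (.var r)) := by
    intro k
    induction k with
    | zero => exact fun w hp => (hM w).2 hp
    | succ k ih => exact fun w hp u hu => ih u ((hM w).1.2 hp u hu)
  exact step k w ((hM w).1.1 hq)

/-- **Failure of deductive right uniform interpolation for the global
consequence relation of modal logic K.** The formula
φ := (q → p) ∧ (p → □p) ∧ (p → r) has no deductive right uniform interpolant
with respect to p. -/
theorem no_deductive_rightUI_for_K (p q r : ℕ)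
    (hpq : p ≠ q) (hpr : p ≠ r) (hqr : q ≠ r) :
    ¬ ∃ ε : MForm, ε.vars ⊆ {q, r} ∧ GlobalK (phiK p q r) ε ∧
        ∀ θ : MForm, p ∉ θ.vars → GlobalK (phiK p q r) θ → GlobalK ε θ := by
  rintro ⟨ε, hvars, hφε, hmin⟩
  set n := ε.depth with hn
  let bad : ℕ → ℕ → Prop := fun x j => (x = q ∧ j = 0) ∨ (x = r ∧ j ≠ n + 1)
  let allR : ℕ → ℕ → Prop := fun x j => x = p ∨ (x = q ∧ j = 0) ∨ x = r
  let noQ : ℕ → ℕ → Prop := fun x j => x = r ∧ j ≠ n + 1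
  have hallR : ∀ w, (chainModel allR).Forces w (phiK p q r) := fun w =>
    ⟨⟨fun _ => Or.inl rfl, fun _ _ _ => Or.inl rfl⟩, fun _ => Or.inr (Or.inr rfl)⟩
  have hnoQ : ∀ w, (chainModel noQ).Forces w (phiK p q r) := fun w =>
    ⟨⟨fun h => absurd h.1 hqr, fun h => absurd h.1 hpr⟩, fun h => absurd h.1 hpr⟩
  have hbad : ∀ w, (chainModel bad).Forces w ε := by
    intro (w : ℕ)
    rcases Nat.eq_zero_or_pos w with rfl | hw
    · refine (forces_chain_congr bad allR ε 0 ?_).2 (hφε _ hallR _)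
      intro j _ hj x hx
      have hxp : x ≠ p := by
        rintro rfl
        have := hvars hx
        simp [hpq, hpr] at this
      have hjn : j ≠ n + 1 := by omega
      simp [bad, allR, hxp, hjn]
    · refine (forces_chain_congr bad noQ ε w ?_).2 (hφε _ hnoQ _)
      intro j hj _ x _
      have hj0 : j ≠ 0 := by omega
      simp [bad, noQ, hj0]
  have hp : p ∉ (MForm.imp (.var q) (boxIter (n + 1) (.var r))).vars := by
    simp [MForm.vars, vars_boxIter, hpq, hpr]
  have hbox := hmin _ hp (phiK_entails_boxIter p q r (n + 1)) _ hbad (0 : ℕ) (Or.inl ⟨rfl, rfl⟩)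
  rcases forces_chain_boxIter bad (n + 1) 0 _ hbox with h | h
  · exact hqr h.1.symm
  · exact h.2 (Nat.zero_add _)
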